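/- (Gilbert–Varshamov upper bound on list decodability) For every prime power q, every τ ∈ (0,1), every constant c > 0, and every ε > 0, there exists n₀ such that for all n ≥ n₀ the following holds: if a code C ⊆ F_q^n is18 (τn, L)_P-list decodable for some L ≤ n^c, then its rate satisfies (log_q |C|)/n ≤ 1 − κ_sp(τ) + ε. -/

import Mathlib

open scoped Classical

/-- The symbol-pair distance between two vectors `x, y : Fin n → F`. -/
def pairDist {F : Type*} [DecidableEq F] {n : ℕ} (x y : Fin n → F) : ℕ :=
  (Finset.univ.filter fun i : Fin n =>
    (x i, x ⟨(i.1 + 1) % n, Nat.mod_lt _ i.pos⟩) ≠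
    (y i, y ⟨(i.1 + 1) % n, Nat.mod_lt _ i.pos⟩)).card

/-- A code `C ⊆ F_q^n` is `(r, L)_P`-list decodable if every symbol-pair ball of
radius `r` contains at most `L` codewords of `C`. -/
noncomputable def pairListDecodable {F : Type*} [Fintype F] [DecidableEq F] {n : ℕ}
    (C : Finset (Fin n → F)) (r : ℝ) (L : ℕ) : Prop :=
  ∀ y : Fin n → F, (C.filter fun c => (pairDist y c : ℝ) ≤ r).card ≤ L

/-- The `q`-ary entropy function `H_q(x)` (with `H_q(0) = 0`, since `logb q 0 = 0`). -/
noncomputable def qEntropy (q : ℕ) (x : ℝ) : ℝ :=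
  x * Real.logb q (q - 1) - x * Real.logb q x - (1 - x) * Real.logb q (1 - x)

/-- `κ_sp(τ) = max_{0 ≤ θ/2 ≤ β ≤ θ ≤ τ} [β H_q((2β−θ)/β) + (1−β) H_q((θ−β)/(1−β))]`. -/
noncomputable def kappaSP (q : ℕ) (δ : ℝ) : ℝ :=
  sSup {y : ℝ | ∃ β θ : ℝ, 0 ≤ θ / 2 ∧ θ / 2 ≤ β ∧ β ≤ θ ∧ θ ≤ δ ∧
    y = β * qEntropy q ((2 * β - θ) / β) + (1 - β) * qEntropy q ((θ - β) / (1 - β))}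

/-!
A codeword `c` lies in the ball around exactly those centres that lie in its own ball, so double
counting pairs of a centre and a nearby codeword gives `|C| * V ≤ L * q ^ n` whenever every ball
has at least `V` elements. As `log L = o(n)`, it remains to show that a pair ball of radius `τ * n`
has at least `q ^ (δ * n)` elements for each `δ < κ_sp(τ)`.

The pair distance is the Hamming distance plus the number of cyclic steps from an agreement to an
error. Error words with `z` zeros, `w` ones and `l` inner transitions from zero to one correspond
to lattice paths with `l` turns, hence number `z.choose l * w.choose l`; each is the support of
`(q - 1) ^ w` errors, of pair weight at most `w + l + 1`. With `w ≈ β * n` and `l ≈ (θ - β) * n`,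
Stirling's formula identifies the exponential growth rate of the product with the expression
maximised in `κ_sp`.
-/

open Filter Finset Topology

section BinaryWords

variable {n : ℕ}

/-- The number of `true` entries of a binary word. -/
def weight {ι : Type*} [Fintype ι] (b : ι → Bool) : ℕ :=
  #{i | b i = true}

/-- The number of ascents (a `false` immediately followed by a `true`) of the word `b` preceded by
the symbol `p`. With `p = false` every run of `true`s is counted; with `p = true` a run at the start
of `b` is not. -/
def ascents (p : Bool) (b : Fin n → Bool) : ℕ :=
  #{i : Fin n | (Fin.cons p b : Fin (n + 1) → Bool) i.castSucc = false ∧ b i = true}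

/-- The binary words of length `n` and weight `w` with at most `l` ascents when preceded
by `p`. -/
def wordsWithAscentsLE (p : Bool) (n w l : ℕ) : Finset (Fin n → Bool) :=
  {b | weight b = w ∧ ascents p b ≤ l}

theorem mem_wordsWithAscentsLE {p : Bool} {w l : ℕ} {b : Fin n → Bool} :
    b ∈ wordsWithAscentsLE p n w l ↔ weight b = w ∧ ascents p b ≤ l := by
  simp [wordsWithAscentsLE]

theorem weight_cons (a : Bool) (b : Fin n → Bool) :
    weight (Fin.cons a b : Fin (n + 1) → Bool) = a.toNat + weight b := by
  cases a <;> simp [weight, Fin.card_filter_univ_succ, add_comm]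

theorem ascents_cons (p a : Bool) (b : Fin n → Bool) :
    ascents p (Fin.cons a b : Fin (n + 1) → Bool) = (!p && a).toNat + ascents a b := by
  cases p <;> cases a <;>
    simp [ascents, Fin.card_filter_univ_succ, add_comm]

theorem card_filter_fin_succ_bool (P : (Fin (n + 1) → Bool) → Prop) [DecidablePred P] :
    #{b | P b} = #{b : Fin n → Bool | P (Fin.cons false b)} +
      #{b : Fin n → Bool | P (Fin.cons true b)} := by
  simp only [card_filter, ← (Fin.consEquiv fun _ => Bool).sum_comp, Fintype.sum_prod_type,
    Fintype.sum_bool]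
  exact add_comm _ _

theorem card_wordsWithAscentsLE_true_succ (n w l : ℕ) :
    #(wordsWithAscentsLE true (n + 1) (w + 1) l) =
      #(wordsWithAscentsLE false n (w + 1) l) + #(wordsWithAscentsLE true n w l) := by
  simp [wordsWithAscentsLE, card_filter_fin_succ_bool, weight_cons, ascents_cons, add_comm 1]

theorem card_wordsWithAscentsLE_false_succ (n w l : ℕ) :
    #(wordsWithAscentsLE false (n + 1) (w + 1) (l + 1)) =
      #(wordsWithAscentsLE false n (w + 1) (l + 1)) + #(wordsWithAscentsLE true n w l) := by
  simp [wordsWithAscentsLE, card_filter_fin_succ_bool, weight_cons, ascents_cons, add_comm 1]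

theorem wordsWithAscentsLE_zero_nonempty (p : Bool) (n l : ℕ) :
    (wordsWithAscentsLE p n 0 l).Nonempty :=
  ⟨fun _ => false, by simp [mem_wordsWithAscentsLE, weight, ascents]⟩

theorem choose_succ_mul_choose_le_card_wordsWithAscentsLE_false {w : ℕ}
    (h_true : ∀ z l, z.choose l * w.choose l ≤ #(wordsWithAscentsLE true (z + w) w l)) (z l : ℕ) :
    (z + 1).choose (l + 1) * w.choose l ≤
      #(wordsWithAscentsLE false (z + (w + 1)) (w + 1) (l + 1)) := by
  rw [← add_assoc, card_wordsWithAscentsLE_false_succ]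
  induction z with
  | zero => simpa [Nat.choose_succ_succ] using le_add_left (h_true 0 l)
  | succ z ih =>
    rw [Nat.choose_succ_succ, add_mul, add_comm, add_right_comm z 1 w,
      card_wordsWithAscentsLE_false_succ]
    exact add_le_add ih (add_right_comm z 1 w ▸ h_true (z + 1) l)

theorem choose_mul_choose_le_card_wordsWithAscentsLE_true (z w l : ℕ) :
    z.choose l * w.choose l ≤ #(wordsWithAscentsLE true (z + w) w l) := by
  induction w generalizing z l with
  | zero => cases l <;> simp [Nat.succ_le_iff, wordsWithAscentsLE_zero_nonempty]
  | succ w ih =>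
    rw [← add_assoc, card_wordsWithAscentsLE_true_succ]
    rcases z, l with ⟨_ | z, _ | l⟩
    case zero.zero | succ.zero => simpa using le_add_left (ih _ 0)
    case zero.succ => simp
    case succ.succ =>
      rw [Nat.choose_succ_succ w, mul_add, add_assoc z, add_comm 1 w]
      exact add_le_add (choose_succ_mul_choose_le_card_wordsWithAscentsLE_false ih z l)
        (add_comm 1 w ▸ add_assoc z 1 w ▸ ih (z + 1) (l + 1))

end BinaryWords

section PairBalls

variable {n : ℕ} {α : Type*} [DecidableEq α]

/-- The binary word marking the positions in which two vectors differ. -/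
def disagreement {ι : Type*} (x y : ι → α) : ι → Bool :=
  fun i => decide (x i ≠ y i)

/-- The number of error vectors of length `n` and Hamming weight `w` over an alphabet of size `q`
whose supports, as binary words preceded by `true`, have exactly `l` ascents. -/
def errorPatternCount (q n w l : ℕ) : ℕ :=
  (n - w).choose l * w.choose l * (q - 1) ^ w

/-- The symbol-pair ball of real radius `r` around `c`. -/
noncomputable def pairBall [Fintype α] (c : Fin n → α) (r : ℝ) : Finset (Fin n → α) :=
  {y | (pairDist y c : ℝ) ≤ r}

theorem card_cyclic_ascents_le (b : Fin n → Bool) :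
    #{i : Fin n | b i = false ∧ b ⟨(i + 1) % n, Nat.mod_lt _ i.pos⟩ = true} ≤
      ascents true b + 1 := by
  cases n with
  | zero => simp
  | succ m =>
    have h_next (i : Fin m) : (i + 1 : ℕ) % (m + 1) = i + 1 := Nat.mod_eq_of_lt (by omega)
    have h_linear : ascents true b =
        #{i : Fin m | b i.castSucc = false ∧ b i.succ = true} := by
      simp [ascents, Fin.card_filter_univ_succ]
    rw [h_linear]
    simp only [card_filter, Fin.sum_univ_castSucc (n := m), Fin.val_castSucc, h_next]
    exact add_le_add le_rfl (by split_ifs <;> simp)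

theorem pairDist_le_weight_add_ascents (x y : Fin n → α) :
    pairDist x y ≤ weight (disagreement x y) + ascents true (disagreement x y) + 1 := by
  rw [add_assoc]
  refine le_trans ?_ (add_le_add_right (card_cyclic_ascents_le _) _)
  refine le_trans (card_le_card fun i hi => ?_) (card_union_le _ _)
  simp only [disagreement]
  grind

theorem card_filter_disagreement_eq {ι : Type*} [Fintype ι] [DecidableEq ι] [Fintype α]
    (c : ι → α) (b : ι → Bool) :
    #{x | disagreement x c = b} = (Fintype.card α - 1) ^ weight b := by
  have h_fiber : ({x | disagreement x c = b} : Finset (ι → α)) =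
      Fintype.piFinset fun i => if b i = true then univ.erase (c i) else {c i} := by
    ext x
    simp only [mem_filter_univ, Fintype.mem_piFinset, funext_iff, disagreement]
    refine forall_congr' fun i => ?_
    cases b i <;> simp
  rw [h_fiber, Fintype.card_piFinset, weight, ← prod_const, prod_filter]
  refine prod_congr rfl fun i _ => ?_
  split_ifs <;> simp

theorem errorPatternCount_le_card_pairBall [Fintype α] {w : ℕ} (hw : w ≤ n) (l : ℕ)
    (c : Fin n → α) {r : ℝ} (hr : (w + l + 1 : ℕ) ≤ r) :
    errorPatternCount (Fintype.card α) n w l ≤ #(pairBall c r) := by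
  have h_words : (n - w).choose l * w.choose l ≤ #(wordsWithAscentsLE true n w l) := by
    obtain ⟨z, rfl⟩ := Nat.exists_eq_add_of_le' hw
    simpa using choose_mul_choose_le_card_wordsWithAscentsLE_true z w l
  have h_mem : ∀ b ∈ wordsWithAscentsLE true n w l, ∀ x, disagreement x c = b →
      x ∈ pairBall c r := by
    rintro _ hb x rfl
    rw [mem_wordsWithAscentsLE] at hb
    have := pairDist_le_weight_add_ascents x c
    have : pairDist x c ≤ w + l + 1 := by omega
    simpa [pairBall] using (Nat.cast_le.2 this).trans hr
  calc errorPatternCount (Fintype.card α) n w l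
      ≤ #(wordsWithAscentsLE true n w l) * (Fintype.card α - 1) ^ w :=
        Nat.mul_le_mul_right _ h_words
    _ = ∑ b ∈ wordsWithAscentsLE true n w l, #{x | disagreement x c = b} := by
        rw [← smul_eq_mul, ← sum_const]
        refine sum_congr rfl fun b hb => ?_
        rw [card_filter_disagreement_eq, (mem_wordsWithAscentsLE.1 hb).1]
    _ ≤ #(pairBall c r) := by
        rw [sum_card_fiberwise_eq_card_filter]
        exact card_le_card fun x hx => h_mem _ (mem_filter.1 hx).2 x rfl

theorem errorPatternCount_pos {q w l : ℕ} (hq : 1 < q) (hlw : l ≤ w) (hwl : w + l ≤ n) :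
    0 < errorPatternCount q n w l :=
  Nat.mul_pos (Nat.mul_pos (Nat.choose_pos (by omega)) (Nat.choose_pos hlw))
    (Nat.pow_pos (by omega))

theorem pairListDecodable.card_mul_le [Fintype α] {C : Finset (Fin n → α)} {r V : ℝ} {L : ℕ}
    (hC : pairListDecodable C r L) (hV : ∀ c ∈ C, V ≤ #(pairBall c r)) :
    #C * V ≤ L * (Fintype.card α : ℝ) ^ n := by
  have h := card_nsmul_le_card_nsmul (fun c y => (pairDist y c : ℝ) ≤ r) hV (t := univ)
    fun y _ => Nat.cast_le.2 (hC y)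
  simpa [mul_comm] using h

end PairBalls

section FactorialAsymptotics

open Real

theorem mul_log_sub_le_log_factorial (m : ℕ) : m * log m - m ≤ log m.factorial := by
  rcases eq_or_ne m 0 with rfl | hm
  · simp
  have h_stirling := Stirling.le_log_factorial_stirling hm
  have h_log : 0 ≤ log m := log_natCast_nonneg m
  have h_two_pi : 0 ≤ log (2 * π) := log_nonneg (by linarith [two_le_pi])
  linarith

theorem log_factorial_le_succ_mul_log_succ_sub (m : ℕ) :
    log m.factorial ≤ (m + 1 : ℕ) * log (m + 1 : ℕ) - m := by
  induction m with
  | zero => simp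
  | succ m ih =>
    have h_pos : (0 : ℝ) < (m + 1 : ℕ) := by positivity
    have h_step : 1 ≤ (m + 2 : ℕ) * (log (m + 2 : ℕ) - log (m + 1 : ℕ)) := by
      have h := one_sub_inv_le_log_of_pos (x := (m + 2 : ℕ) / (m + 1 : ℕ)) (by positivity)
      rw [log_div (by positivity) h_pos.ne', inv_div] at h
      refine le_trans (le_of_eq ?_) (mul_le_mul_of_nonneg_left h (by positivity))
      push_cast
      field_simp
      ring
    rw [Nat.factorial_succ, Nat.cast_mul, log_mul h_pos.ne' (by positivity)]
    push_cast [add_assoc, one_add_one_eq_two] at *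
    linarith

theorem tendsto_log_div_natCast : Tendsto (fun n : ℕ => log n / n) atTop (𝓝 0) :=
  isLittleO_log_id_atTop.tendsto_div_nhds_zero.comp tendsto_natCast_atTop_atTop

theorem tendsto_log_rpow_div_natCast (c : ℝ) :
    Tendsto (fun n : ℕ => log ((n : ℝ) ^ c) / n) atTop (𝓝 0) := by
  have h_lim := tendsto_log_div_natCast.const_mul c
  rw [mul_zero] at h_lim
  refine h_lim.congr' ?_
  filter_upwards [eventually_gt_atTop 0] with n hn
  rw [log_rpow (Nat.cast_pos.2 hn), mul_div_assoc]

theorem mul_log_div_sub_div_mul_log {x : ℝ} {n : ℕ} (hn : n ≠ 0) :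
    x * log x / n - x / n * log n = -negMulLog (x / n) := by
  rcases eq_or_ne x 0 with rfl | hx
  · simp
  · rw [negMulLog, log_div hx (by positivity)]
    ring

theorem tendsto_log_factorial_div {m : ℕ → ℕ} {a : ℝ}
    (hm : Tendsto (fun n => (m n : ℝ) / n) atTop (𝓝 a)) :
    Tendsto (fun n => log (m n).factorial / n - m n / n * log n) atTop
      (𝓝 (-negMulLog a - a)) := by
  have h_succ : Tendsto (fun n => ((m n + 1 : ℕ) : ℝ) / n) atTop (𝓝 a) := by
    simpa [add_div] using hm.add (tendsto_one_div_atTop_nhds_zero_nat (𝕜 := ℝ))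
  have h_lower : Tendsto (fun n => -negMulLog (m n / n) - m n / n) atTop
      (𝓝 (-negMulLog a - a)) :=
    ((continuous_negMulLog.tendsto a).comp hm).neg.sub hm
  have h_upper : Tendsto (fun n => -negMulLog ((m n + 1 : ℕ) / n) + log n / n - m n / n) atTop
      (𝓝 (-negMulLog a - a)) := by
    simpa using (((continuous_negMulLog.tendsto a).comp h_succ).neg.add
      tendsto_log_div_natCast).sub hm
  refine tendsto_of_tendsto_of_tendsto_of_le_of_le' h_lower h_upper ?_ ?_
  all_goals
    filter_upwards [eventually_ne_atTop 0] with n hn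
    rw [← mul_log_div_sub_div_mul_log hn]
  · have h := div_le_div_of_nonneg_right (mul_log_sub_le_log_factorial (m n)) n.cast_nonneg
    rw [sub_div] at h
    linarith
  · have h := div_le_div_of_nonneg_right (log_factorial_le_succ_mul_log_succ_sub (m n))
      n.cast_nonneg
    rw [sub_div] at h
    have h_split : ((m n + 1 : ℕ) : ℝ) / n * log n = m n / n * log n + log n / n := by
      push_cast
      ring
    linarith

theorem mul_binEntropy_div {a b : ℝ} (hb : 0 ≤ b) (hba : b ≤ a) :
    a * binEntropy (b / a) = negMulLog b + negMulLog (a - b) - negMulLog a := by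
  rcases (hb.trans hba).eq_or_lt with rfl | ha
  · simp [le_antisymm hba hb]
  obtain ⟨p, rfl⟩ : ∃ p, b = a * p := ⟨b / a, by field_simp⟩
  rw [mul_div_cancel_left₀ p ha.ne', binEntropy_eq_negMulLog_add_negMulLog_one_sub,
    ← mul_one_sub, negMulLog_mul, negMulLog_mul]
  ring

theorem tendsto_log_choose_div {m k : ℕ → ℕ} {a b : ℝ}
    (hm : Tendsto (fun n => (m n : ℝ) / n) atTop (𝓝 a))
    (hk : Tendsto (fun n => (k n : ℝ) / n) atTop (𝓝 b)) (hkm : ∀ᶠ n in atTop, k n ≤ m n) :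
    Tendsto (fun n => log ((m n).choose (k n)) / n) atTop (𝓝 (a * binEntropy (b / a))) := by
  have hb : 0 ≤ b := ge_of_tendsto' hk fun n => by positivity
  have hba : b ≤ a := le_of_tendsto_of_tendsto hk hm (hkm.mono fun n h => by dsimp only; gcongr)
  have h_sub : Tendsto (fun n => ((m n - k n : ℕ) : ℝ) / n) atTop (𝓝 (a - b)) := by
    refine (hm.sub hk).congr' (hkm.mono fun n h => ?_)
    simp only [Nat.cast_sub h, sub_div]
  have h_lim := ((tendsto_log_factorial_div hm).sub (tendsto_log_factorial_div hk)).sub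
    (tendsto_log_factorial_div h_sub)
  have h_eq : a * binEntropy (b / a) = -negMulLog a - a - (-negMulLog b - b) -
      (-negMulLog (a - b) - (a - b)) := by
    rw [mul_binEntropy_div hb hba]
    ring
  rw [h_eq]
  refine h_lim.congr' (hkm.mono fun n h => ?_)
  have h_choose : log (m n).factorial =
      log ((m n).choose (k n)) + log (k n).factorial + log (m n - k n).factorial := by
    have h_pos : 0 < (m n).choose (k n) := Nat.choose_pos h
    rw [← Nat.choose_mul_factorial_mul_factorial h, Nat.cast_mul, Nat.cast_mul,
      log_mul (by positivity) (by positivity), log_mul (by positivity) (by positivity)]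
  rw [h_choose, Nat.cast_sub h]
  ring

end FactorialAsymptotics

section BallVolume

open Real

theorem log_mul_qEntropy {q : ℕ} (hq : 1 < q) (x : ℝ) :
    log q * qEntropy q x = x * log (q - 1) + binEntropy x := by
  have h_log : log q ≠ 0 := (log_pos (by exact_mod_cast hq)).ne'
  simp only [qEntropy, logb, binEntropy, log_inv]
  field_simp
  ring

/-- The exponent maximised in `kappaSP`: `β` is the fraction of errors and `θ - β` the number of
error runs divided by the length. -/
noncomputable def pairExponent (q : ℕ) (β θ : ℝ) : ℝ :=
  β * qEntropy q ((2 * β - θ) / β) + (1 - β) * qEntropy q ((θ - β) / (1 - β))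

theorem log_mul_pairExponent {q : ℕ} (hq : 1 < q) {β θ : ℝ} (h_half : θ / 2 ≤ β) (hβθ : β ≤ θ)
    (hθ : θ ≤ 1) :
    log q * pairExponent q β θ = (1 - β) * binEntropy ((θ - β) / (1 - β)) +
      β * binEntropy ((θ - β) / β) + β * log (q - 1) := by
  have h_symm : β * binEntropy ((2 * β - θ) / β) = β * binEntropy ((θ - β) / β) := by
    rcases eq_or_ne β 0 with rfl | hβ
    · simp
    · rw [← binEntropy_one_sub, one_sub_div hβ]
      ring_nf
  have h_ones : β * ((2 * β - θ) / β) = 2 * β - θ :=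
    mul_div_cancel_of_imp' fun h => by linarith
  have h_zeros : (1 - β) * ((θ - β) / (1 - β)) = θ - β :=
    mul_div_cancel_of_imp' fun h => by linarith
  calc log q * pairExponent q β θ
      = β * (log q * qEntropy q ((2 * β - θ) / β)) +
          (1 - β) * (log q * qEntropy q ((θ - β) / (1 - β))) := by
        rw [pairExponent]
        ring
    _ = β * ((2 * β - θ) / β) * log (q - 1) + β * binEntropy ((2 * β - θ) / β) +
          ((1 - β) * ((θ - β) / (1 - β)) * log (q - 1) +
            (1 - β) * binEntropy ((θ - β) / (1 - β))) := by
        rw [log_mul_qEntropy hq, log_mul_qEntropy hq]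
        ring
    _ = _ := by
        rw [h_ones, h_zeros, h_symm]
        ring

theorem tendsto_floor_mul_sub_one_div {a : ℝ} (ha : 0 ≤ a) :
    Tendsto (fun n : ℕ => ((⌊a * n⌋₊ - 1 : ℕ) : ℝ) / n) atTop (𝓝 a) := by
  have h_lower : Tendsto (fun n : ℕ => a - 2 / n) atTop (𝓝 a) := by
    simpa using (tendsto_const_div_atTop_nhds_zero_nat (2 : ℝ)).const_sub a
  refine tendsto_of_tendsto_of_tendsto_of_le_of_le' h_lower tendsto_const_nhds ?_ ?_
  all_goals
    filter_upwards [eventually_gt_atTop 0] with n hn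
    have hn : (0 : ℝ) < n := Nat.cast_pos.2 hn
  · have h_floor := Nat.lt_floor_add_one (a * n)
    have h_pred : (⌊a * n⌋₊ : ℝ) ≤ (⌊a * n⌋₊ - 1 : ℕ) + 1 := by exact_mod_cast le_tsub_add
    rw [le_div_iff₀ hn, sub_mul, div_mul_cancel₀ _ hn.ne']
    linarith
  · rw [div_le_iff₀ hn]
    exact (Nat.cast_le.2 (Nat.sub_le _ _)).trans (Nat.floor_le (by positivity))

theorem eventually_floor_sub_one_add_le {τ a b : ℝ} (hτ : 0 < τ) (hb : 0 ≤ b) (hba : b ≤ a)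
    (hab : a + b ≤ τ) :
    ∀ᶠ n : ℕ in atTop, ((⌊a * n⌋₊ - 1 + (⌊b * n⌋₊ - 1) + 1 : ℕ) : ℝ) ≤ τ * n := by
  have ha : 0 ≤ a := hb.trans hba
  filter_upwards [(tendsto_natCast_atTop_atTop.const_mul_atTop hτ).eventually_ge_atTop 1] with n hn
  have h_floor : ⌊b * n⌋₊ ≤ ⌊a * n⌋₊ := by gcongr
  have h_max : ⌊a * n⌋₊ - 1 + (⌊b * n⌋₊ - 1) + 1 ≤ max 1 (⌊a * n⌋₊ + ⌊b * n⌋₊) := by omega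
  refine (Nat.cast_le.2 h_max).trans ?_
  push_cast
  refine max_le hn ?_
  calc (⌊a * n⌋₊ : ℝ) + ⌊b * n⌋₊ ≤ a * n + b * n :=
        add_le_add (Nat.floor_le (by positivity)) (Nat.floor_le (by positivity))
    _ = (a + b) * n := by ring
    _ ≤ τ * n := by gcongr

theorem tendsto_log_errorPatternCount_div {q : ℕ} (hq : 1 < q) {β θ : ℝ} {w l : ℕ → ℕ}
    (hw : Tendsto (fun n => (w n : ℝ) / n) atTop (𝓝 β))
    (hl : Tendsto (fun n => (l n : ℝ) / n) atTop (𝓝 (θ - β)))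
    (hlw : ∀ᶠ n in atTop, l n ≤ w n) (hwl : ∀ᶠ n in atTop, w n + l n ≤ n) :
    Tendsto (fun n => log (errorPatternCount q n (w n) (l n)) / n) atTop
      (𝓝 (log q * pairExponent q β θ)) := by
  have hβθ : 0 ≤ θ - β := ge_of_tendsto' hl fun n => by positivity
  have h_half : θ - β ≤ β :=
    le_of_tendsto_of_tendsto hl hw (hlw.mono fun n h => by dsimp only; gcongr)
  have hθ : β + (θ - β) ≤ 1 := by
    refine le_of_tendsto (hw.add hl) (hwl.mono fun n h => ?_)
    rw [← add_div]
    exact div_le_one_of_le₀ (by exact_mod_cast h) n.cast_nonneg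
  have h_zeros : Tendsto (fun n => ((n - w n : ℕ) : ℝ) / n) atTop (𝓝 (1 - β)) := by
    refine (hw.const_sub 1).congr' ?_
    filter_upwards [hwl, eventually_ne_atTop 0] with n h hn
    rw [Nat.cast_sub (by omega), sub_div, div_self (by positivity)]
  have h_lim := ((tendsto_log_choose_div h_zeros hl (hwl.mono fun n h => by omega)).add
    (tendsto_log_choose_div hw hl hlw)).add (hw.mul_const (log (q - 1)))
  rw [log_mul_pairExponent hq (by linarith) (by linarith) (by linarith)]
  refine h_lim.congr' ?_
  filter_upwards [hlw, hwl] with n hlw hwl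
  have h_choose_zeros : 0 < (n - w n).choose (l n) := Nat.choose_pos (by omega)
  have h_choose_ones : 0 < (w n).choose (l n) := Nat.choose_pos hlw
  have h_pred : 0 < q - 1 := by omega
  rw [errorPatternCount, Nat.cast_mul, Nat.cast_mul, Nat.cast_pow,
    log_mul (by positivity) (by positivity), log_mul (by positivity) (by positivity), log_pow,
    Nat.cast_pred (by omega)]
  ring

variable {α : Type*} [Fintype α] [DecidableEq α] [Nontrivial α]

theorem eventually_rpow_le_card_pairBall_of_lt_pairExponent {τ : ℝ} (hτ0 : 0 < τ) (hτ1 : τ ≤ 1)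
    {β θ : ℝ} (h_half : θ / 2 ≤ β) (hβθ : β ≤ θ) (hθτ : θ ≤ τ) {δ : ℝ}
    (hδ : δ < pairExponent (Fintype.card α) β θ) :
    ∀ᶠ n : ℕ in atTop, ∀ c : Fin n → α,
      (Fintype.card α : ℝ) ^ (δ * n) ≤ #(pairBall c (τ * n)) := by
  have hq : 1 < Fintype.card α := Fintype.one_lt_card
  have hβ : 0 ≤ β := by linarith
  have h_runs : 0 ≤ θ - β := sub_nonneg.2 hβθ
  have h_runs_le : θ - β ≤ β := by linarith
  -- The `- 1`s absorb the `+ 1` in the pair weight bound `w + l + 1`.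
  let w (n : ℕ) : ℕ := ⌊β * n⌋₊ - 1
  let l (n : ℕ) : ℕ := ⌊(θ - β) * n⌋₊ - 1
  have hlw (n : ℕ) : l n ≤ w n := by
    dsimp only [w, l]
    gcongr
  have h_radius : ∀ᶠ n : ℕ in atTop, ((w n + l n + 1 : ℕ) : ℝ) ≤ τ * n :=
    eventually_floor_sub_one_add_le hτ0 h_runs h_runs_le (by linarith)
  have hwl : ∀ᶠ n : ℕ in atTop, w n + l n ≤ n := by
    filter_upwards [h_radius] with n hn
    have : w n + l n + 1 ≤ n := by
      exact_mod_cast hn.trans (mul_le_of_le_one_left n.cast_nonneg hτ1)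
    omega
  have h_lim := tendsto_log_errorPatternCount_div hq (tendsto_floor_mul_sub_one_div hβ)
    (tendsto_floor_mul_sub_one_div h_runs) (.of_forall hlw) hwl
  have h_log : 0 < log (Fintype.card α) := log_pos (by exact_mod_cast hq)
  filter_upwards [h_radius, hwl, h_lim.eventually_const_lt (mul_lt_mul_of_pos_left hδ h_log),
    eventually_gt_atTop 0] with n h_radius hwl h_lt hn c
  have h_pos : (0 : ℝ) < errorPatternCount (Fintype.card α) n (w n) (l n) :=
    Nat.cast_pos.2 (errorPatternCount_pos hq (hlw n) hwl)
  calc (Fintype.card α : ℝ) ^ (δ * n)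
      ≤ errorPatternCount (Fintype.card α) n (w n) (l n) := by
        rw [rpow_def_of_pos (by positivity), ← le_log_iff_exp_le h_pos, ← mul_assoc]
        exact ((lt_div_iff₀ (Nat.cast_pos.2 hn)).1 h_lt).le
    _ ≤ #(pairBall c (τ * n)) :=
        Nat.cast_le.2 (errorPatternCount_le_card_pairBall (by omega) _ c h_radius)

theorem eventually_rpow_le_card_pairBall_of_lt_kappaSP {τ : ℝ} (hτ0 : 0 < τ) (hτ1 : τ ≤ 1) {δ : ℝ}
    (hδ : δ < kappaSP (Fintype.card α) τ) :
    ∀ᶠ n : ℕ in atTop, ∀ c : Fin n → α,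
      (Fintype.card α : ℝ) ^ (δ * n) ≤ #(pairBall c (τ * n)) := by
  rw [kappaSP] at hδ
  obtain ⟨_, ⟨β, θ, -, h_half, hβθ, hθτ, rfl⟩, hlt⟩ := exists_lt_of_lt_csSup
    (by exact ⟨_, 0, 0, by simp, by simp, le_rfl, hτ0.le, rfl⟩) hδ
  exact eventually_rpow_le_card_pairBall_of_lt_pairExponent hτ0 hτ1 h_half hβθ hθτ hlt

theorem pairListDecodable.logb_card_add_le {n : ℕ} {C : Finset (Fin n → α)} {r e : ℝ} {L : ℕ}
    (hC : pairListDecodable C r L)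
    (he : ∀ c : Fin n → α, (Fintype.card α : ℝ) ^ e ≤ #(pairBall c r)) :
    logb (Fintype.card α) #C + e ≤ logb (Fintype.card α) L + n := by
  have hq : (1 : ℝ) < Fintype.card α := by exact_mod_cast Fintype.one_lt_card
  rcases C.eq_empty_or_nonempty with rfl | h_nonempty
  · have h_space : (Fintype.card α : ℝ) ^ e ≤ (Fintype.card α : ℝ) ^ (n : ℝ) := by
      refine (he fun _ => Classical.arbitrary α).trans ?_
      rw [rpow_natCast]
      exact_mod_cast (card_le_univ _).trans_eq (by simp)
    have h_list : 0 ≤ logb (Fintype.card α) L :=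
      div_nonneg (log_natCast_nonneg L) (log_natCast_nonneg _)
    simpa using add_le_add h_list ((rpow_le_rpow_left_iff hq).1 h_space)
  · have h_count := hC.card_mul_le fun c _ => he c
    have h_card : (0 : ℝ) < #C := by exact_mod_cast h_nonempty.card_pos
    have h_pow : 0 < (Fintype.card α : ℝ) ^ e := by positivity
    have h_list : (L : ℝ) ≠ 0 := by
      intro hL
      rw [hL, zero_mul] at h_count
      exact (mul_pos h_card h_pow).not_ge h_count
    have h_logb := logb_le_logb_of_le hq (by positivity) h_count
    rwa [logb_mul h_card.ne' h_pow.ne', logb_mul h_list (by positivity),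
      logb_rpow (by positivity) hq.ne', logb_pow, logb_self_eq_one hq, mul_one] at h_logb

end BallVolume

theorem gv_upper_bound_list_decoding_general {α : Type*} [Fintype α] [DecidableEq α] [Nontrivial α]
    {q : ℕ} (hq : Fintype.card α = q) {τ : ℝ} (hτ0 : 0 < τ) (hτ1 : τ ≤ 1)
    {ℓ : ℕ → ℝ} (hℓ : Tendsto (fun n => Real.log (ℓ n) / n) atTop (𝓝 0)) {ε : ℝ} (hε : 0 < ε) :
    ∃ n₀ : ℕ, ∀ n : ℕ, n₀ ≤ n → ∀ C : Finset (Fin n → α), ∀ L : ℕ,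
      (L : ℝ) ≤ ℓ n → pairListDecodable C (τ * n) L →
      Real.logb q C.card / n ≤ 1 - kappaSP q τ + ε := by
  subst hq
  set q : ℕ := Fintype.card α
  have hq : (1 : ℝ) < q := by exact_mod_cast Fintype.one_lt_card
  have h_rate : Tendsto (fun n => Real.logb q (ℓ n) / n) atTop (𝓝 0) := by
    simpa only [Real.logb, div_right_comm, zero_div] using hℓ.div_const (Real.log q)
  refine eventually_atTop.1 ?_
  filter_upwards [eventually_rpow_le_card_pairBall_of_lt_kappaSP (α := α) hτ0 hτ1
      (sub_lt_self _ (half_pos hε)), h_rate.eventually_lt_const (half_pos hε),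
    eventually_gt_atTop 0] with n h_ball h_list hn C L hL hC
  have hn : (0 : ℝ) < n := Nat.cast_pos.2 hn
  have h_list : Real.logb q L ≤ ε / 2 * n := by
    rcases L.eq_zero_or_pos with rfl | hL0
    · simpa using by positivity
    · exact (Real.logb_le_logb_of_le hq (Nat.cast_pos.2 hL0) hL).trans
        ((div_lt_iff₀ hn).1 h_list).le
  have h_count := hC.logb_card_add_le h_ball
  rw [div_le_iff₀ hn]
  linarith

/-- (Gilbert–Varshamov upper bound on list decodability) For every finite field of
size `q`, every `τ ∈ (0,1)`, every constant `c > 0`, and every `ε > 0`, there is `n₀`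
such that for all `n ≥ n₀`: if `C ⊆ F_q^n` is `(τn, L)_P`-list decodable for some
`L ≤ n^c`, then `(log_q |C|)/n ≤ 1 − κ_sp(τ) + ε`. -/
theorem gv_upper_bound_list_decoding {F : Type*} [Field F] [Fintype F] [DecidableEq F]
    {q : ℕ} (hq : Fintype.card F = q) (τ : ℝ) (hτ0 : 0 < τ) (hτ1 : τ < 1)
    (c : ℝ) (hc : 0 < c) (ε : ℝ) (hε : 0 < ε) :
    ∃ n₀ : ℕ, ∀ n : ℕ, n₀ ≤ n → ∀ C : Finset (Fin n → F), ∀ L : ℕ,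
      (L : ℝ) ≤ (n : ℝ) ^ c → pairListDecodable C (τ * n) L →
      Real.logb q C.card / n ≤ 1 - kappaSP q τ + ε :=
  gv_upper_bound_list_decoding_general hq hτ0 hτ1.le (tendsto_log_rpow_div_natCast c) hε
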